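/- For t = 1212 and for t = 2121, there is no I(6, 4) admissible set in which every element is of type t. -/

import Mathlib

/-! An element of weight 4 and type `abab` is determined by its support, so an `I(6,4)` set of
monotype `abab` contains the vectors `00abab`, `ab00ab` and `abab00`. At every coordinate
exactly one of these three vanishes and the other two agree, so they form a clash. -/

/-- The support of a vector `v ∈ {0,1,2}^m`: the set of coordinates where `v` is nonzero. -/
def Supp {m : ℕ} (v : Fin m → Fin 3) : Finset (Fin m) :=
  Finset.univ.filter (fun i => v i ≠ 0)

/-- Exactly one of the three values `a`, `b`, `c` is nonzero. -/
def ExactlyOneNonzero (a b c : Fin 3) : Prop :=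
  (a ≠ 0 ∧ b = 0 ∧ c = 0) ∨ (a = 0 ∧ b ≠ 0 ∧ c = 0) ∨ (a = 0 ∧ b = 0 ∧ c ≠ 0)

/-- Two vectors form a clash if the support of one is contained in the support of the other. -/
def Clash2 {m : ℕ} (v₁ v₂ : Fin m → Fin 3) : Prop :=
  Supp v₁ ⊆ Supp v₂ ∨ Supp v₂ ⊆ Supp v₁

/-- Three vectors form a clash if there is no coordinate at which exactly one of them is
nonzero and no coordinate at which the three values are pairwise distinct. -/
def Clash3 {m : ℕ} (v₁ v₂ v₃ : Fin m → Fin 3) : Prop :=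
  (¬ ∃ i, ExactlyOneNonzero (v₁ i) (v₂ i) (v₃ i)) ∧
  (¬ ∃ i, v₁ i ≠ v₂ i ∧ v₁ i ≠ v₃ i ∧ v₂ i ≠ v₃ i)

/-- A set of vectors is admissible if no two and no three of its elements form a clash. -/
def IsAdmissible {m : ℕ} (A : Set (Fin m → Fin 3)) : Prop :=
  (∀ v₁ ∈ A, ∀ v₂ ∈ A, v₁ ≠ v₂ → ¬ Clash2 v₁ v₂) ∧
  (∀ v₁ ∈ A, ∀ v₂ ∈ A, ∀ v₃ ∈ A, v₁ ≠ v₂ → v₁ ≠ v₃ → v₂ ≠ v₃ → ¬ Clash3 v₁ v₂ v₃)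

/-- `A` is an `I(m,w)` set: for every `w`-element subset `S` of `[m]` it contains exactly one
vector with support `S`, and it contains no other vectors. -/
def IsISet (m w : ℕ) (A : Set (Fin m → Fin 3)) : Prop :=
  (∀ S : Finset (Fin m), S.card = w → ∃! v, v ∈ A ∧ Supp v = S) ∧
  (∀ v ∈ A, (Supp v).card = w)

/-- The list of nonzero values of `v`, read in increasing order of position. -/
def nonzeroValues {m : ℕ} (v : Fin m → Fin 3) : List (Fin 3) :=
  ((Supp v).sort (· ≤ ·)).map v

/-- `v` is of type `t` if `v` has at least `t.length` nonzero coordinates and the `i`-th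
nonzero value of `v` (in increasing order of position) is `t i`, i.e. `t` is a prefix of the
list of nonzero values of `v`. -/
def IsOfType {m : ℕ} (v : Fin m → Fin 3) (t : List (Fin 3)) : Prop :=
  t <+: nonzeroValues v

/-- `S₁, S₂, S₃` form a type `t` clash: whenever `v₁, v₂, v₃` have supports `S₁, S₂, S₃`
respectively and are all of type `t`, they form a clash. -/
def TypedClash {m : ℕ} (t : List (Fin 3)) (S₁ S₂ S₃ : Finset (Fin m)) : Prop :=
  ∀ v₁ v₂ v₃ : Fin m → Fin 3, Supp v₁ = S₁ → Supp v₂ = S₂ → Supp v₃ = S₃ →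
    IsOfType v₁ t → IsOfType v₂ t → IsOfType v₃ t → Clash3 v₁ v₂ v₃

/-- A type whose length is the weight of `v` prescribes all nonzero values of `v`; here the
support of `v` is listed in increasing order by `l`. -/
lemma map_support_eq {m : ℕ} {v : Fin m → Fin 3} {l : List (Fin m)} {t : List (Fin 3)}
    (hl : l.Pairwise (· < ·)) (hv : Supp v = l.toFinset) (ht : t.length = l.length)
    (h : IsOfType v t) : l.map v = t := by
  have hs : l.toFinset.sort (· ≤ ·) = l :=
    (List.toFinset_sort (· ≤ ·) (hl.imp ne_of_lt)).2 (hl.imp le_of_lt)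
  have hn : nonzeroValues v = l.map v := by rw [nonzeroValues, hv, hs]
  rw [IsOfType, hn] at h
  exact (h.eq_of_length (by rw [ht, List.length_map])).symm

/-- For `t = 1212` and `t = 2121`, there is no `I(6,4)` admissible set in which every element
is of type `t`. -/
theorem no_monotype_I64 (t : List (Fin 3))
    (ht : t = ([1, 2, 1, 2] : List (Fin 3)) ∨ t = ([2, 1, 2, 1] : List (Fin 3))) :
    ¬ ∃ A : Set (Fin 6 → Fin 3),
        IsISet 6 4 A ∧ IsAdmissible A ∧ ∀ v ∈ A, IsOfType v t := by
  rintro ⟨A, ⟨hI, -⟩, ⟨-, hA⟩, hT⟩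
  obtain ⟨a, b, rfl⟩ : ∃ a b : Fin 3, t = [a, b, a, b] := by
    rcases ht with rfl | rfl
    · exact ⟨1, 2, rfl⟩
    · exact ⟨2, 1, rfl⟩
  obtain ⟨x, ⟨hxA, hx⟩, -⟩ := hI [2, 3, 4, 5].toFinset (by decide)
  obtain ⟨y, ⟨hyA, hy⟩, -⟩ := hI [0, 1, 4, 5].toFinset (by decide)
  obtain ⟨z, ⟨hzA, hz⟩, -⟩ := hI [0, 1, 2, 3].toFinset (by decide)
  have mx := map_support_eq (by decide) hx rfl (hT x hxA)
  have my := map_support_eq (by decide) hy rfl (hT y hyA)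
  have mz := map_support_eq (by decide) hz rfl (hT z hzA)
  simp only [List.map_cons, List.map_nil, List.cons.injEq, and_true] at mx my mz
  have sx : ∀ i, x i ≠ 0 ↔ i ∈ ([2, 3, 4, 5] : List (Fin 6)).toFinset := by simp [← hx, Supp]
  have sy : ∀ i, y i ≠ 0 ↔ i ∈ ([0, 1, 4, 5] : List (Fin 6)).toFinset := by simp [← hy, Supp]
  have sz : ∀ i, z i ≠ 0 ↔ i ∈ ([0, 1, 2, 3] : List (Fin 6)).toFinset := by simp [← hz, Supp]
  have x0 : x 0 = 0 := not_not.1 (mt (sx 0).1 (by decide))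
  have x1 : x 1 = 0 := not_not.1 (mt (sx 1).1 (by decide))
  have y2 : y 2 = 0 := not_not.1 (mt (sy 2).1 (by decide))
  have y3 : y 3 = 0 := not_not.1 (mt (sy 3).1 (by decide))
  have z4 : z 4 = 0 := not_not.1 (mt (sz 4).1 (by decide))
  have z5 : z 5 = 0 := not_not.1 (mt (sz 5).1 (by decide))
  have ha : a ≠ 0 := mx.1 ▸ (sx 2).2 (by decide)
  obtain ⟨x2, x3, x4, x5⟩ := mx
  obtain ⟨y0, y1, y4, y5⟩ := my
  obtain ⟨z0, z1, z2, z3⟩ := mz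
  refine hA x hxA y hyA z hzA ?_ ?_ ?_ ⟨?_, ?_⟩
  · rintro rfl
    exact ha (x2.symm.trans y2)
  · rintro rfl
    exact ha (x4.symm.trans z4)
  · rintro rfl
    exact ha (y4.symm.trans z4)
  · rintro ⟨i, hi⟩
    unfold ExactlyOneNonzero at hi
    fin_cases i <;> simp_all
  · rintro ⟨i, hi⟩
    fin_cases i <;> simp_all
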